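/- Fix degrees a_1 ≤ ... ≤ a_n and s = Σ_{i=1}^n (a_i − 1). For a nonnegative integer d, the statement EGH_{a,n}(d) holds if and only if EGH_{a,n}(s − d − 1) holds. -/

import Mathlib

open MvPolynomial

/-- Hilbert function of a homogeneous ideal `I`: the `K`-dimension of its degree-`d` piece. -/
noncomputable def hilb {K : Type} [Field K] {n : ℕ}
    (I : Ideal (MvPolynomial (Fin n) K)) (d : ℕ) : ℕ :=
  Module.finrank K ↥(Submodule.restrictScalars K I ⊓ homogeneousSubmodule (Fin n) K d)

/-- Hilbert function of the quotient `S/I` in degree `d`. -/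
noncomputable def hilbQ {K : Type} [Field K] {n : ℕ}
    (I : Ideal (MvPolynomial (Fin n) K)) (d : ℕ) : ℕ :=
  Module.finrank K
    ((homogeneousSubmodule (Fin n) K d).map (Ideal.Quotient.mkₐ K I).toLinearMap)

/-- A homogeneous ideal: closed under taking homogeneous components. -/
def IsHomog {K : Type} [Field K] {n : ℕ} (I : Ideal (MvPolynomial (Fin n) K)) : Prop :=
  ∀ f ∈ I, ∀ d : ℕ, homogeneousComponent d f ∈ I

/-- `f 0, ..., f (r-1)` is a regular sequence: it generates a proper ideal and each `f i`
is a nonzerodivisor modulo the ideal generated by the previous elements. -/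
def IsRegSeq {K : Type} [Field K] {n r : ℕ} (f : Fin r → MvPolynomial (Fin n) K) : Prop :=
  Ideal.span (Set.range f) ≠ ⊤ ∧
  ∀ i : Fin r, ∀ g : MvPolynomial (Fin n) K,
    f i * g ∈ Ideal.span (f '' {j : Fin r | j < i}) →
      g ∈ Ideal.span (f '' {j : Fin r | j < i})

/-- A monomial ideal: generated by monomials. -/
def IsMonomialIdeal {K : Type} [Field K] {n : ℕ} (I : Ideal (MvPolynomial (Fin n) K)) : Prop :=
  ∃ T : Set (Fin n →₀ ℕ), I = Ideal.span ((fun u => monomial u (1 : K)) '' T)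

/-- `x^v` is lexicographically greater than `x^u` (for `x_0 > x_1 > ... > x_{n-1}`). -/
def lexGT {n : ℕ} (v u : Fin n →₀ ℕ) : Prop :=
  ∃ i : Fin n, u i < v i ∧ ∀ j : Fin n, j < i → v j = u j
/-- `EGHd K n a d`: every homogeneous ideal of `K[x_1,...,x_n]` containing a homogeneous
regular sequence of degrees `a 0, ..., a (n-1)` has the same Hilbert function in degrees
`d` and `d+1` as some homogeneous ideal containing the pure powers `x_i^{a i}`. -/
def EGHd (K : Type) [Field K] (n : ℕ) (a : Fin n → ℕ) (d : ℕ) : Prop :=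
  ∀ I : Ideal (MvPolynomial (Fin n) K), IsHomog I →
    (∃ f : Fin n → MvPolynomial (Fin n) K,
      IsRegSeq f ∧ (∀ i, (f i).IsHomogeneous (a i)) ∧ ∀ i, f i ∈ I) →
    ∃ J : Ideal (MvPolynomial (Fin n) K), IsHomog J ∧
      (∀ i : Fin n, (X i : MvPolynomial (Fin n) K) ^ a i ∈ J) ∧
      hilb I d = hilb J d ∧ hilb I (d + 1) = hilb J (d + 1)

/-!
Let `F` be generated by a homogeneous regular sequence of degrees `a i` in the `n` variables of
`S`, and put `s = ∑ (a i - 1)`. A regular sequence of length `n` in an ideal `m` determines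
`Extⁿ(S ⧸ m, S)` as the socle of its quotient; comparing with the sequence of variables shows that
the socle of `S ⧸ F` is simple. Since the Hilbert function of `S ⧸ F` is that of `S` modulo the
pure powers, this socle is the piece of degree `s`, so multiplication into it is a perfect pairing
between complementary degrees. Under this pairing `F : I` is the annihilator of `I`, which gives
the liaison identity `H(S/F, t) = H(S/I, t) + H(S/(F : I), s - t)`. To go from degree `d` to
degree `e = s - d - 1`, link `I` to `F : I`, replace the latter in degrees `d, d + 1` by an ideal
`J` containing the pure powers `P`, and link back to `P : J`.
-/

section ExtRegular

open CategoryTheory Abelian RingTheory.Sequence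

universe u v

variable {R : Type u} [CommRing R] [Small.{v} R] {N M : ModuleCat.{v} R} {r : R}

theorem smul_ext_eq_zero_of_mem_annihilator (hr : r ∈ Module.annihilator R N) {i : ℕ}
    (e : Ext N M i) : r • e = 0 := by
  have id_zero : r • 𝟙 N = 0 := by
    ext x
    exact Module.mem_annihilator.1 hr x
  calc r • e = (Ext.mk₀ (r • 𝟙 N)).comp e (zero_add i) := by simp [Ext.mk₀_smul]
    _ = 0 := by simp [id_zero]

theorem postcomp_extClass_surjective (hr : r ∈ Module.annihilator R N) (hM : IsSMulRegular M r)
    (i : ℕ) :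
    Function.Surjective (Ext.postcompOfLinear hM.smulShortComplex_shortExact.extClass R N
      (rfl : i + 1 = i + 1)) := fun x =>
  Ext.covariant_sequence_exact₁ N hM.smulShortComplex_shortExact x
    ((Ext.smul_eq_comp_mk₀ x r).symm.trans (smul_ext_eq_zero_of_mem_annihilator hr x)) rfl

theorem postcomp_extClass_injective (hM : IsSMulRegular M r) (i : ℕ) [Subsingleton (Ext N M i)] :
    Function.Injective (Ext.postcompOfLinear hM.smulShortComplex_shortExact.extClass R N
      (rfl : i + 1 = i + 1)) := by
  rw [injective_iff_map_eq_zero]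
  intro x hx
  obtain ⟨y, rfl⟩ := Ext.covariant_sequence_exact₃ N hM.smulShortComplex_shortExact x rfl hx
  rw [Subsingleton.elim (α := Ext N M i) y 0]
  exact Ext.zero_comp _ _ _ _ _

theorem subsingleton_ext_of_isWeaklyRegular {rs : List R}
    (hN : ∀ r ∈ rs, r ∈ Module.annihilator R N) (hM : IsWeaklyRegular M rs) {i : ℕ}
    (hi : i < rs.length) : Subsingleton (Ext N M i) := by
  induction rs generalizing M i with
  | nil => simp at hi
  | cons r rs ih =>
    obtain ⟨hr, hrs⟩ := (isWeaklyRegular_cons_iff M r rs).1 hM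
    obtain ⟨hrN, hrsN⟩ := List.forall_mem_cons.1 hN
    cases i with
    | zero =>
      have := IsSMulRegular.linearMap_subsingleton_of_mem_annihilator hr hrN
      exact (Ext.addEquiv₀.trans ModuleCat.homAddEquiv).subsingleton
    | succ i =>
      have : Subsingleton (Ext N (M.smulShortComplex r).X₃ i) :=
        ih (M := ModuleCat.of R (QuotSMulTop r M)) hrsN hrs (Nat.lt_of_succ_lt_succ hi)
      exact (postcomp_extClass_surjective hrN hr i).subsingleton

/- Each element of the sequence shifts the degree by one, through the connecting map of
`0 ⟶ M ⟶ M ⟶ M ⧸ rM ⟶ 0`. -/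
theorem nonempty_ext_length_equiv_hom_quotient {rs : List R}
    (hN : ∀ r ∈ rs, r ∈ Module.annihilator R N) (hM : IsWeaklyRegular M rs) :
    Nonempty (Ext N M rs.length ≃ₗ[R] (N →ₗ[R] M ⧸ (Ideal.ofList rs • ⊤ : Submodule R M))) := by
  induction rs generalizing M with
  | nil =>
    have quot_nil : (Ideal.ofList ([] : List R) • ⊤ : Submodule R M) = ⊥ := by simp
    exact ⟨Ext.linearEquiv₀ (R := R) ≪≫ₗ ModuleCat.homLinearEquiv ≪≫ₗ
      (Submodule.quotEquivOfEqBot _ quot_nil).symm.congrRight⟩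
  | cons r rs ih =>
    obtain ⟨hr, hrs⟩ := (isWeaklyRegular_cons_iff M r rs).1 hM
    obtain ⟨hrN, hrsN⟩ := List.forall_mem_cons.1 hN
    obtain ⟨e⟩ := ih (M := ModuleCat.of R (QuotSMulTop r M)) hrsN hrs
    have := subsingleton_ext_of_isWeaklyRegular hN hM (i := rs.length) (by simp)
    have shift := LinearEquiv.ofBijective _
      ⟨postcomp_extClass_injective (N := N) hr rs.length,
        postcomp_extClass_surjective hrN hr rs.length⟩
    exact ⟨shift.symm ≪≫ₗ e ≪≫ₗ
      (Submodule.quotOfListConsSMulTopEquivQuotSMulTopInner M r rs).symm.congrRight⟩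

end ExtRegular

section Socle

open RingTheory.Sequence

universe u

variable {R : Type u} [CommRing R]

/-- The linear equivalence `φ ↦ φ 1` between the maps `R ⧸ I → M` and the `I`-torsion of `M`;
for a maximal ideal `I` the latter is the socle of `M` at `I`. -/
def homQuotientEquivTorsionBySet (I : Ideal R) (M : Type*) [AddCommGroup M] [Module R M] :
    (R ⧸ I →ₗ[R] M) ≃ₗ[R] ↥(Submodule.torsionBySet R M (I : Set R)) where
  toFun φ := ⟨φ 1, (Submodule.mem_torsionBySet_iff _ _).2 fun a => by
    have smul_one : (a : R) • (1 : R ⧸ I) = 0 := by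
      rw [Algebra.smul_def, mul_one, Ideal.Quotient.algebraMap_eq]
      exact Ideal.Quotient.eq_zero_iff_mem.2 a.2
    rw [← map_smul, smul_one, map_zero]⟩
  map_add' _ _ := rfl
  map_smul' _ _ := rfl
  invFun x := Submodule.liftQ I (LinearMap.toSpanSingleton R M x) fun a ha =>
    (Submodule.mem_torsionBySet_iff _ _).1 x.2 ⟨a, ha⟩
  left_inv φ := by
    ext
    exact one_smul R _
  right_inv x := Subtype.ext (one_smul R _)

theorem isSimpleModule_torsionBySet_quotient_ofList {m : Ideal R} [m.IsMaximal] {rs xs : List R}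
    (hlen : rs.length = xs.length) (hrs : IsWeaklyRegular R rs) (hxs : IsWeaklyRegular R xs)
    (hrm : Ideal.ofList rs ≤ m) (hxm : Ideal.ofList xs = m) :
    IsSimpleModule R ↥(Submodule.torsionBySet R (R ⧸ Ideal.ofList rs) (m : Set R)) := by
  have ext_equiv {ys : List R} (hys : IsWeaklyRegular R ys) (hym : Ideal.ofList ys ≤ m) :=
    nonempty_ext_length_equiv_hom_quotient (N := ModuleCat.of R (R ⧸ m)) (M := ModuleCat.of R R)
      (fun y hy => by
        rw [Ideal.annihilator_quotient]
        exact hym (Ideal.subset_span hy)) hys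
  have self_smul (I : Ideal R) : (I • ⊤ : Submodule R R) = I := I.mul_top
  obtain ⟨e_rs⟩ := ext_equiv hrs hrm
  obtain ⟨e_xs⟩ := ext_equiv hxs hxm.le
  rw [← hlen] at e_xs
  have e := e_rs.symm ≪≫ₗ e_xs
  rw [self_smul, self_smul, hxm] at e
  have torsion_top : Submodule.torsionBySet R (R ⧸ m) (m : Set R) = ⊤ :=
    (Module.isTorsionBySet_iff_torsionBySet_eq_top _).1
      ((Module.isTorsionBySet_quotient_iff _ _).2 fun x _ hr => m.mul_mem_right x hr)
  have residue_simple : IsSimpleModule R (R ⧸ m) :=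
    isSimpleModule_iff_isCoatom.2 (Ideal.isMaximal_def.1 inferInstance)
  exact ((homQuotientEquivTorsionBySet m _).symm ≪≫ₗ e ≪≫ₗ homQuotientEquivTorsionBySet m _ ≪≫ₗ
    LinearEquiv.ofTop _ torsion_top).isSimpleModule_iff.2 residue_simple

end Socle

section FiniteRank

variable {K E F : Type*} [Field K] [AddCommGroup E] [Module K E] [AddCommGroup F] [Module K F]

theorem finrank_map_add_finrank_inf_ker (g : E →ₗ[K] F) (V : Submodule K E)
    [FiniteDimensional K V] :
    Module.finrank K (V.map g) + Module.finrank K ↥(V ⊓ LinearMap.ker g) = Module.finrank K V := by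
  rw [← (g.domRestrict V).finrank_range_add_finrank_ker, LinearMap.range_domRestrict,
    LinearMap.ker_domRestrict, ← Submodule.map_comap_subtype, Submodule.finrank_map_subtype_eq]

theorem finrank_add_finrank_ker_flip [FiniteDimensional K E] [FiniteDimensional K F]
    (B : E →ₗ[K] F →ₗ[K] K) :
    Module.finrank K E + Module.finrank K (LinearMap.ker B.flip) =
      Module.finrank K F + Module.finrank K (LinearMap.ker B) := by
  rw [← B.finrank_range_add_finrank_ker,
    ← Subspace.finrank_add_finrank_dualCoannihilator_eq (LinearMap.range B),
    LinearMap.dualCoannihilator_range_eq_ker_flip]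
  exact add_right_comm _ _ _

theorem finrank_add_finrank_eq_of_radicals (B : E →ₗ[K] F →ₗ[K] K) {V V' : Submodule K E}
    {W W' : Submodule K F} [FiniteDimensional K V] [FiniteDimensional K W]
    (hV' : ∀ v, v ∈ V' ↔ v ∈ V ∧ ∀ w ∈ W, B v w = 0)
    (hW' : ∀ w, w ∈ W' ↔ w ∈ W ∧ ∀ v ∈ V, B v w = 0) :
    Module.finrank K V + Module.finrank K W' = Module.finrank K W + Module.finrank K V' := by
  have left_radical : (LinearMap.ker (B.domRestrict₁₂ V W)).map V.subtype = V' := by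
    ext v
    simp [hV', LinearMap.ext_iff, LinearMap.domRestrict₁₂_apply, and_comm]
  have right_radical : (LinearMap.ker (B.domRestrict₁₂ V W).flip).map W.subtype = W' := by
    ext w
    simp [hW', LinearMap.ext_iff, LinearMap.domRestrict₁₂_apply, and_comm]
  rw [← left_radical, ← right_radical, Submodule.finrank_map_subtype_eq,
    Submodule.finrank_map_subtype_eq]
  exact finrank_add_finrank_ker_flip _

end FiniteRank

section GradedPieces

attribute [local instance] MvPolynomial.gradedAlgebra

section

variable {σ R : Type*} [CommSemiring R] {f : MvPolynomial σ R} {a : ℕ}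

theorem coe_decompose_homogeneousSubmodule (p : MvPolynomial σ R) (d : ℕ) :
    (DirectSum.decompose (homogeneousSubmodule σ R) p d : MvPolynomial σ R) =
      homogeneousComponent d p :=
  decomposition.decompose'_apply p d

theorem homogeneousComponent_add_mul (hf : f.IsHomogeneous a) (g : MvPolynomial σ R) (d : ℕ) :
    homogeneousComponent (a + d) (f * g) = f * homogeneousComponent d g := by
  rw [← coe_decompose_homogeneousSubmodule, ← coe_decompose_homogeneousSubmodule]
  exact DirectSum.coe_decompose_mul_add_of_left_mem (homogeneousSubmodule σ R) hf

theorem homogeneousComponent_mul_of_lt (hf : f.IsHomogeneous a) (g : MvPolynomial σ R) {d : ℕ}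
    (hd : d < a) : homogeneousComponent d (f * g) = 0 := by
  rw [← coe_decompose_homogeneousSubmodule]
  exact DirectSum.coe_decompose_mul_of_left_mem_of_not_le (homogeneousSubmodule σ R) hf
    (Nat.not_le.2 hd)

end

variable {K : Type} [Field K] {n : ℕ}

theorem isHomog_span {T : Set (MvPolynomial (Fin n) K)} (hT : ∀ p ∈ T, ∃ a, p.IsHomogeneous a) :
    IsHomog (Ideal.span T) := fun _ hf d =>
  homogeneousComponent_mem_of_mem (Ideal.homogeneous_span (homogeneousSubmodule (Fin n) K) T hT)
    hf d

/-- The degree-`d` piece of an ideal of the polynomial ring, a `K`-subspace of dimension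
`hilb I d`. -/
noncomputable abbrev degreePart (I : Ideal (MvPolynomial (Fin n) K)) (d : ℕ) :
    Submodule K (MvPolynomial (Fin n) K) :=
  Submodule.restrictScalars K I ⊓ homogeneousSubmodule (Fin n) K d

instance (d : ℕ) : FiniteDimensional K (homogeneousSubmodule (Fin n) K d) :=
  Module.Finite.iff_fg.2 (homogeneousSubmodule_fg (Fin n) K d)

variable {I F : Ideal (MvPolynomial (Fin n) K)} {d : ℕ}

theorem degreePart_eq_inf_ker (I : Ideal (MvPolynomial (Fin n) K)) (d : ℕ) :
    degreePart I d = homogeneousSubmodule (Fin n) K d ⊓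
      LinearMap.ker (Ideal.Quotient.mkₐ K I).toLinearMap := by
  ext p
  simp [Ideal.Quotient.eq_zero_iff_mem, and_comm]

theorem hilb_add_hilbQ (I : Ideal (MvPolynomial (Fin n) K)) (d : ℕ) :
    hilb I d + hilbQ I d = Module.finrank K (homogeneousSubmodule (Fin n) K d) := by
  rw [← finrank_map_add_finrank_inf_ker (Ideal.Quotient.mkₐ K I).toLinearMap,
    ← degreePart_eq_inf_ker]
  exact add_comm _ _

theorem hilbQ_eq_zero_iff :
    hilbQ I d = 0 ↔ ∀ p : MvPolynomial (Fin n) K, p.IsHomogeneous d → p ∈ I := by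
  rw [hilbQ, Submodule.finrank_eq_zero, ← LinearMap.le_ker_iff_map]
  simp [SetLike.le_def, Ideal.Quotient.eq_zero_iff_mem]

theorem IsHomog.mem_colon_iff (hI : IsHomog I) {q : MvPolynomial (Fin n) K} :
    q ∈ F.colon I ↔ ∀ k, ∀ p ∈ degreePart I k, q * p ∈ F := by
  rw [Submodule.mem_colon]
  refine ⟨fun h k p hp => h p hp.1, fun h p hp => ?_⟩
  rw [smul_eq_mul, ← sum_homogeneousComponent p, Finset.mul_sum]
  exact F.sum_mem fun k _ => h k _ ⟨hI p hp k, homogeneousComponent_isHomogeneous k p⟩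

theorem IsHomog.colon (hF : IsHomog F) (hI : IsHomog I) : IsHomog (F.colon I) := by
  intro q hq d
  refine hI.mem_colon_iff.2 fun k p hp => ?_
  rw [mul_comm, ← homogeneousComponent_add_mul hp.2, mul_comm p q]
  exact hF _ (Submodule.mem_colon.1 hq p hp.1) _

end GradedPieces

theorem span_range_eq_init_sup_last {R : Type*} [CommRing R] {r : ℕ} (f : Fin (r + 1) → R) :
    Ideal.span (Set.range f) =
      Ideal.span (Set.range (Fin.init f)) ⊔ Ideal.span {f (Fin.last r)} := by
  rw [← Fin.snoc_init_self f, Fin.range_snoc, Ideal.span_insert, sup_comm]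
  simp

section HypersurfaceSection

variable {K : Type} [Field K] {n : ℕ} {F : Ideal (MvPolynomial (Fin n) K)}
  {f : MvPolynomial (Fin n) K} {a : ℕ}

theorem map_mkₐ_degreePart_sup_span_singleton (hF : IsHomog F) (hf : f.IsHomogeneous a) (d : ℕ) :
    (degreePart (F ⊔ Ideal.span {f}) (a + d)).map (Ideal.Quotient.mkₐ K F).toLinearMap =
      (homogeneousSubmodule (Fin n) K d).map
        ((Ideal.Quotient.mkₐ K F).toLinearMap ∘ₗ LinearMap.mulLeft K f) := by
  apply le_antisymm
  · rintro _ ⟨p, ⟨hpG, hp⟩, rfl⟩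
    obtain ⟨q, hq, _, hfr, rfl⟩ := Submodule.mem_sup.1 hpG
    obtain ⟨r, rfl⟩ := Ideal.mem_span_singleton.1 hfr
    refine ⟨homogeneousComponent d r, homogeneousComponent_isHomogeneous d r, ?_⟩
    refine Ideal.Quotient.eq.2 ?_
    have comp_q := hF q hq (a + d)
    rw [← homogeneousComponent_eq_self hp, map_add, homogeneousComponent_add_mul hf]
    simpa using comp_q
  · rintro _ ⟨r, hr, rfl⟩
    exact ⟨f * r, ⟨Ideal.mul_mem_right _ _ (Ideal.mem_sup_right (Ideal.mem_span_singleton_self f)),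
      hf.mul hr⟩, rfl⟩

theorem finrank_map_mkₐ_mul (hreg : ∀ g, f * g ∈ F → g ∈ F) (d : ℕ) :
    Module.finrank K ((homogeneousSubmodule (Fin n) K d).map
      ((Ideal.Quotient.mkₐ K F).toLinearMap ∘ₗ LinearMap.mulLeft K f)) = hilbQ F d := by
  have kernel_eq : homogeneousSubmodule (Fin n) K d ⊓
      LinearMap.ker ((Ideal.Quotient.mkₐ K F).toLinearMap ∘ₗ LinearMap.mulLeft K f) =
      degreePart F d := by
    ext g
    exact ⟨fun ⟨hg, hker⟩ => ⟨hreg g (Ideal.Quotient.eq_zero_iff_mem.1 hker), hg⟩,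
      fun ⟨hgF, hg⟩ => ⟨hg, Ideal.Quotient.eq_zero_iff_mem.2 (F.mul_mem_left f hgF)⟩⟩
  have rank_nullity := finrank_map_add_finrank_inf_ker
    ((Ideal.Quotient.mkₐ K F).toLinearMap ∘ₗ LinearMap.mulLeft K f)
    (homogeneousSubmodule (Fin n) K d)
  rw [kernel_eq, ← hilb_add_hilbQ F, add_comm] at rank_nullity
  exact Nat.add_left_cancel rank_nullity

theorem hilb_sup_span_singleton (hF : IsHomog F) (hf : f.IsHomogeneous a)
    (hreg : ∀ g, f * g ∈ F → g ∈ F) (d : ℕ) :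
    hilb (F ⊔ Ideal.span {f}) (a + d) = hilbQ F d + hilb F (a + d) := by
  have kernel_eq : degreePart (F ⊔ Ideal.span {f}) (a + d) ⊓
      LinearMap.ker (Ideal.Quotient.mkₐ K F).toLinearMap = degreePart F (a + d) := by
    ext g
    exact ⟨fun ⟨⟨_, hg⟩, hker⟩ => ⟨Ideal.Quotient.eq_zero_iff_mem.1 hker, hg⟩,
      fun ⟨hgF, hg⟩ => ⟨⟨Ideal.mem_sup_left hgF, hg⟩, Ideal.Quotient.eq_zero_iff_mem.2 hgF⟩⟩
  have rank_nullity := finrank_map_add_finrank_inf_ker (Ideal.Quotient.mkₐ K F).toLinearMap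
    (degreePart (F ⊔ Ideal.span {f}) (a + d))
  rw [kernel_eq, map_mkₐ_degreePart_sup_span_singleton hF hf, finrank_map_mkₐ_mul hreg]
    at rank_nullity
  exact rank_nullity.symm

theorem degreePart_sup_span_singleton_of_lt (hF : IsHomog F) (hf : f.IsHomogeneous a) {d : ℕ}
    (hd : d < a) : degreePart (F ⊔ Ideal.span {f}) d = degreePart F d := by
  refine le_antisymm ?_ (inf_le_inf_right _ (fun _ => Ideal.mem_sup_left))
  rintro p ⟨hpG, hp⟩
  obtain ⟨q, hq, _, hfr, rfl⟩ := Submodule.mem_sup.1 hpG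
  obtain ⟨r, rfl⟩ := Ideal.mem_span_singleton.1 hfr
  rw [← homogeneousComponent_eq_self hp, map_add, homogeneousComponent_mul_of_lt hf r hd, add_zero]
  exact ⟨hF q hq d, homogeneousComponent_isHomogeneous d q⟩

theorem hilbQ_sup_span_singleton (hF : IsHomog F) (hf : f.IsHomogeneous a)
    (hreg : ∀ g, f * g ∈ F → g ∈ F) (d : ℕ) :
    hilbQ (F ⊔ Ideal.span {f}) (a + d) + hilbQ F d = hilbQ F (a + d) := by
  have := hilb_sup_span_singleton hF hf hreg d
  have := hilb_add_hilbQ F (a + d)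
  have := hilb_add_hilbQ (F ⊔ Ideal.span {f}) (a + d)
  omega

theorem hilbQ_sup_span_singleton_of_lt (hF : IsHomog F) (hf : f.IsHomogeneous a) {d : ℕ}
    (hd : d < a) : hilbQ (F ⊔ Ideal.span {f}) d = hilbQ F d := by
  have hilb_eq : hilb (F ⊔ Ideal.span {f}) d = hilb F d :=
    congrArg (fun V : Submodule K (MvPolynomial (Fin n) K) => Module.finrank K V)
      (degreePart_sup_span_singleton_of_lt hF hf hd)
  have := hilb_add_hilbQ F d
  have := hilb_add_hilbQ (F ⊔ Ideal.span {f}) d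
  omega

end HypersurfaceSection

section RegularSequences

open RingTheory.Sequence

variable {K : Type} [Field K] {n r : ℕ}

theorem IsRegSeq.init {f : Fin (r + 1) → MvPolynomial (Fin n) K} (hf : IsRegSeq f) :
    IsRegSeq (Fin.init f) := by
  refine ⟨fun h => hf.1 (top_le_iff.1 ?_), fun i => ?_⟩
  · rw [← h, span_range_eq_init_sup_last f]
    exact le_sup_left
  · have image_eq : Fin.init f '' {j | j < i} = f '' {j | j < i.castSucc} := by
      change (f ∘ Fin.castSucc) '' Set.Iio i = f '' Set.Iio i.castSucc
      rw [Set.image_comp, Fin.image_castSucc_Iio]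
    rw [image_eq]
    exact hf.2 i.castSucc

theorem IsRegSeq.mem_of_last_mul_mem {f : Fin (r + 1) → MvPolynomial (Fin n) K} (hf : IsRegSeq f)
    {g : MvPolynomial (Fin n) K}
    (hg : f (Fin.last r) * g ∈ Ideal.span (Set.range (Fin.init f))) :
    g ∈ Ideal.span (Set.range (Fin.init f)) := by
  have image_eq : f '' {j | j < Fin.last r} = Set.range (Fin.init f) := by
    change f '' Set.Iio (Fin.last r) = Set.range (f ∘ Fin.castSucc)
    rw [Set.range_comp]
    congr 1
    ext i
    simp [Fin.range_castSucc, Fin.lt_def]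
  rw [← image_eq] at hg ⊢
  exact hf.2 (Fin.last r) g hg

theorem IsRegSeq.ne_zero {f : Fin r → MvPolynomial (Fin n) K} (hf : IsRegSeq f)
    (i : Fin r) : f i ≠ 0 := fun h =>
  hf.1 <| (Ideal.eq_top_iff_one _).2 <| Ideal.span_mono (Set.image_subset_range _ _) <|
    hf.2 i 1 (by simp [h])

theorem IsRegSeq.degree_pos {f : Fin r → MvPolynomial (Fin n) K} {a : Fin r → ℕ}
    (hf : IsRegSeq f) (hfa : ∀ i, (f i).IsHomogeneous (a i)) (i : Fin r) : 0 < a i := by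
  refine Nat.pos_of_ne_zero fun h => ?_
  have hC : f i = C (coeff 0 (f i)) :=
    totalDegree_eq_zero_iff_eq_C.1 ((totalDegree_zero_iff_isHomogeneous _).2 (h ▸ hfa i))
  have hne : coeff 0 (f i) ≠ 0 := fun h0 => hf.ne_zero i (by rw [hC, h0, C_0])
  refine hf.1 (Ideal.eq_top_of_isUnit_mem _ (Ideal.subset_span (Set.mem_range_self i)) ?_)
  rw [hC]
  exact hne.isUnit.map C

theorem isHomog_span_range {f : Fin r → MvPolynomial (Fin n) K} {a : Fin r → ℕ}
    (hfa : ∀ i, (f i).IsHomogeneous (a i)) : IsHomog (Ideal.span (Set.range f)) :=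
  isHomog_span (Set.forall_mem_range.2 fun i => ⟨a i, hfa i⟩)

theorem IsRegSeq.hilbQ_eq {f g : Fin r → MvPolynomial (Fin n) K} {a : Fin r → ℕ}
    (hf : IsRegSeq f) (hg : IsRegSeq g) (hfa : ∀ i, (f i).IsHomogeneous (a i))
    (hga : ∀ i, (g i).IsHomogeneous (a i)) (d : ℕ) :
    hilbQ (Ideal.span (Set.range f)) d = hilbQ (Ideal.span (Set.range g)) d := by
  induction r generalizing d with
  | zero => rw [Subsingleton.elim f g]
  | succ r ih =>
    have init_eq := ih hf.init hg.init (a := Fin.init a) (fun i => hfa i.castSucc)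
      (fun i => hga i.castSucc)
    have homog_f := isHomog_span_range (f := Fin.init f) (a := Fin.init a) fun i => hfa i.castSucc
    have homog_g := isHomog_span_range (f := Fin.init g) (a := Fin.init a) fun i => hga i.castSucc
    rw [span_range_eq_init_sup_last f, span_range_eq_init_sup_last g]
    obtain hd | hd := lt_or_ge d (a (Fin.last r))
    · rw [hilbQ_sup_span_singleton_of_lt homog_f (hfa _) hd,
        hilbQ_sup_span_singleton_of_lt homog_g (hga _) hd, init_eq]
    · obtain ⟨e, rfl⟩ := Nat.exists_eq_add_of_le hd
      have step_f := hilbQ_sup_span_singleton homog_f (hfa _) (fun _ => hf.mem_of_last_mul_mem) e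
      have step_g := hilbQ_sup_span_singleton homog_g (hga _) (fun _ => hg.mem_of_last_mul_mem) e
      rw [init_eq, init_eq] at step_f
      exact Nat.add_right_cancel (step_f.trans step_g.symm)

theorem ideal_ofList_ofFn {R : Type*} [CommRing R] (f : Fin r → R) :
    Ideal.ofList (List.ofFn f) = Ideal.span (Set.range f) := by
  simp [Ideal.ofList, Set.range]

theorem IsRegSeq.isWeaklyRegular {f : Fin r → MvPolynomial (Fin n) K} (hf : IsRegSeq f) :
    IsWeaklyRegular (MvPolynomial (Fin n) K) (List.ofFn f) := by
  induction r with
  | zero => simp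
  | succ r ih =>
    rw [List.ofFn_succ', List.concat_eq_append, isWeaklyRegular_append_iff,
      isWeaklyRegular_singleton_iff, isSMulRegular_quotient_iff_mem_of_smul_mem]
    refine ⟨ih hf.init, fun g hg => ?_⟩
    rw [ideal_ofList_ofFn, smul_eq_mul, Ideal.mul_top] at hg ⊢
    exact hf.mem_of_last_mul_mem hg

end RegularSequences

section PurePowers

theorem mem_span_X_pow_image {σ R : Type*} [CommSemiring R] {b : σ → ℕ} {T : Set σ}
    {p : MvPolynomial σ R} :
    p ∈ Ideal.span ((fun i => (X i : MvPolynomial σ R) ^ b i) '' T) ↔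
      ∀ m ∈ p.support, ∃ i ∈ T, b i ≤ m i := by
  have image_eq : (fun i => (X i : MvPolynomial σ R) ^ b i) '' T =
      (fun m => monomial m (1 : R)) '' ((fun i => Finsupp.single i (b i)) '' T) := by
    simp only [Set.image_image, X_pow_eq_monomial]
  rw [image_eq, mem_ideal_span_monomial_image]
  simp

variable {n : ℕ} {K : Type} [Field K] {a : Fin n → ℕ}

/-- The sequence of pure powers `x_i ^ a i`, the model complete intersection of degrees `a`. -/
noncomputable abbrev purePowers (K : Type) [Field K] (a : Fin n → ℕ) (i : Fin n) :
    MvPolynomial (Fin n) K :=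
  X i ^ a i

theorem isHomogeneous_purePowers (i : Fin n) : (purePowers K a i).IsHomogeneous (a i) :=
  isHomogeneous_X_pow i (a i)

theorem mem_span_range_purePowers {p : MvPolynomial (Fin n) K} :
    p ∈ Ideal.span (Set.range (purePowers K a)) ↔ ∀ m ∈ p.support, ∃ i, a i ≤ m i := by
  simp [← Set.image_univ, mem_span_X_pow_image]

theorem isRegSeq_purePowers (ha : ∀ i, 0 < a i) : IsRegSeq (purePowers K a) := by
  constructor
  · rw [Ne, Ideal.eq_top_iff_one, mem_span_range_purePowers]
    intro h
    obtain ⟨i, hi⟩ := h 0 (by simp)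
    exact (ha i).not_ge hi
  · intro i g hg
    rw [mem_span_X_pow_image] at hg ⊢
    intro m hm
    have hm' : Finsupp.single i (a i) + m ∈ (purePowers K a i * g).support := by
      rw [purePowers, X_pow_eq_monomial, mem_support_iff, coeff_monomial_mul, one_mul]
      exact mem_support_iff.1 hm
    obtain ⟨j, hji, hj⟩ := hg _ hm'
    refine ⟨j, hji, ?_⟩
    simpa [Finsupp.single_eq_of_ne (Fin.ne_of_lt hji)] using hj

theorem hilbQ_purePowers_eq_zero {t : ℕ} (ht : ∑ i, (a i - 1) < t) :
    hilbQ (Ideal.span (Set.range (purePowers K a))) t = 0 := by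
  rw [hilbQ_eq_zero_iff]
  intro p hp
  rw [mem_span_range_purePowers]
  intro m hm
  by_contra! hlt
  have degree_le : m.degree ≤ ∑ i, (a i - 1) := by
    rw [Finsupp.degree_eq_sum]
    exact Finset.sum_le_sum fun i _ => Nat.le_sub_one_of_lt (hlt i)
  exact mem_support_iff.1 hm (hp.coeff_eq_zero (degree_le.trans_lt ht).ne)

theorem hilbQ_purePowers_ne_zero (ha : ∀ i, 0 < a i) :
    hilbQ (Ideal.span (Set.range (purePowers K a))) (∑ i, (a i - 1)) ≠ 0 := by
  let m : Fin n →₀ ℕ := Finsupp.equivFunOnFinite.symm fun i => a i - 1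
  have m_degree : m.degree = ∑ i, (a i - 1) := Finsupp.degree_eq_sum m
  rw [Ne, hilbQ_eq_zero_iff]
  intro h
  obtain ⟨i, hi⟩ := mem_span_range_purePowers.1
    (h (monomial m 1) (isHomogeneous_monomial 1 m_degree)) m (by simp)
  exact (Nat.sub_one_lt_of_lt (ha i)).not_ge hi

end PurePowers

theorem idealOfVars_eq_ker_constantCoeff (σ R : Type*) [CommRing R] :
    idealOfVars σ R = RingHom.ker (constantCoeff : MvPolynomial σ R →+* R) := by
  ext p
  rw [← pow_one (idealOfVars σ R), mem_pow_idealOfVars_iff', RingHom.mem_ker, constantCoeff_eq]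
  simp [Finsupp.degree_eq_zero_iff]

instance (σ K : Type*) [Field K] : (idealOfVars σ K).IsMaximal := by
  rw [idealOfVars_eq_ker_constantCoeff]
  exact RingHom.ker_isMaximal_of_surjective _ fun c => ⟨C c, constantCoeff_C σ c⟩

theorem span_range_le_idealOfVars {ι σ R : Type*} [CommRing R] {f : ι → MvPolynomial σ R}
    {a : ι → ℕ} (ha : ∀ i, 0 < a i) (hfa : ∀ i, (f i).IsHomogeneous (a i)) :
    Ideal.span (Set.range f) ≤ idealOfVars σ R := by
  rw [idealOfVars_eq_ker_constantCoeff, Ideal.span_le]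
  rintro _ ⟨i, rfl⟩
  refine RingHom.mem_ker.2 ((hfa i).coeff_eq_zero ?_)
  rw [map_zero]
  exact (ha i).ne

theorem mk_mem_torsionBySet_idealOfVars {σ R : Type*} [CommRing R] {F : Ideal (MvPolynomial σ R)}
    {p : MvPolynomial σ R} :
    Ideal.Quotient.mk F p ∈ Submodule.torsionBySet (MvPolynomial σ R) (MvPolynomial σ R ⧸ F)
      (idealOfVars σ R : Set (MvPolynomial σ R)) ↔ ∀ i, X i * p ∈ F := by
  rw [← Submodule.torsionBySet_eq_torsionBySet_span, Submodule.mem_torsionBySet_iff,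
    Set.forall_subtype_range_iff]
  exact forall_congr' fun _ => Ideal.Quotient.eq_zero_iff_mem

section CompleteIntersection

variable {K : Type} [Field K] {n : ℕ} {f : Fin n → MvPolynomial (Fin n) K} {a : Fin n → ℕ}

theorem IsRegSeq.isSimpleModule_socle (hf : IsRegSeq f) (hfa : ∀ i, (f i).IsHomogeneous (a i)) :
    IsSimpleModule (MvPolynomial (Fin n) K)
      ↥(Submodule.torsionBySet (MvPolynomial (Fin n) K)
        (MvPolynomial (Fin n) K ⧸ Ideal.span (Set.range f))
        (idealOfVars (Fin n) K : Set (MvPolynomial (Fin n) K))) := by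
  have vars_eq : (purePowers K fun _ : Fin n => 1) = X := funext fun _ => pow_one _
  have vars_regular : IsRegSeq (purePowers K fun _ : Fin n => 1) :=
    isRegSeq_purePowers fun _ => one_pos
  rw [← ideal_ofList_ofFn]
  refine isSimpleModule_torsionBySet_quotient_ofList (by simp) hf.isWeaklyRegular
    vars_regular.isWeaklyRegular ?_ ?_
  · rw [ideal_ofList_ofFn]
    exact span_range_le_idealOfVars (hf.degree_pos hfa) hfa
  · rw [ideal_ofList_ofFn, vars_eq]

theorem IsRegSeq.exists_sub_mul_mem_span (hf : IsRegSeq f) (hfa : ∀ i, (f i).IsHomogeneous (a i))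
    {u v : MvPolynomial (Fin n) K}
    (hu : u ∉ Ideal.span (Set.range f)) (hXu : ∀ i, X i * u ∈ Ideal.span (Set.range f))
    (hXv : ∀ i, X i * v ∈ Ideal.span (Set.range f)) :
    ∃ c, v - c * u ∈ Ideal.span (Set.range f) := by
  have := hf.isSimpleModule_socle hfa
  have mk_u_ne_zero : Subtype.mk _ (mk_mem_torsionBySet_idealOfVars.2 hXu) ≠ 0 :=
    fun h => hu (Ideal.Quotient.eq_zero_iff_mem.1 (congrArg Subtype.val h))
  obtain ⟨c, hc⟩ := IsSimpleModule.toSpanSingleton_surjective (MvPolynomial (Fin n) K)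
    mk_u_ne_zero ⟨_, mk_mem_torsionBySet_idealOfVars.2 hXv⟩
  exact ⟨c, Ideal.Quotient.eq.1 (congrArg Subtype.val hc).symm⟩

theorem IsRegSeq.mem_span_of_sum_lt (hf : IsRegSeq f) (hfa : ∀ i, (f i).IsHomogeneous (a i))
    {t : ℕ} (ht : ∑ i, (a i - 1) < t)
    {p : MvPolynomial (Fin n) K} (hp : p.IsHomogeneous t) : p ∈ Ideal.span (Set.range f) := by
  refine hilbQ_eq_zero_iff.1 ?_ p hp
  rw [hf.hilbQ_eq (isRegSeq_purePowers (hf.degree_pos hfa)) hfa isHomogeneous_purePowers]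
  exact hilbQ_purePowers_eq_zero ht

theorem IsRegSeq.exists_isHomogeneous_notMem_span (hf : IsRegSeq f)
    (hfa : ∀ i, (f i).IsHomogeneous (a i)) :
    ∃ u : MvPolynomial (Fin n) K, u.IsHomogeneous (∑ i, (a i - 1)) ∧
      u ∉ Ideal.span (Set.range f) := by
  have ha := hf.degree_pos hfa
  by_contra! h
  apply hilbQ_purePowers_ne_zero (K := K) ha
  rw [← hf.hilbQ_eq (isRegSeq_purePowers ha) hfa isHomogeneous_purePowers]
  exact hilbQ_eq_zero_iff.2 h

theorem IsRegSeq.X_mul_mem_span (hf : IsRegSeq f) (hfa : ∀ i, (f i).IsHomogeneous (a i))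
    {p : MvPolynomial (Fin n) K} (hp : p.IsHomogeneous (∑ i, (a i - 1))) (i : Fin n) :
    X i * p ∈ Ideal.span (Set.range f) :=
  hf.mem_span_of_sum_lt hfa (Nat.lt_one_add_iff.2 le_rfl) ((isHomogeneous_X K i).mul hp)

theorem IsRegSeq.exists_sub_smul_mem_span (hf : IsRegSeq f) (hfa : ∀ i, (f i).IsHomogeneous (a i))
    {u w : MvPolynomial (Fin n) K}
    (hu : u.IsHomogeneous (∑ i, (a i - 1))) (huF : u ∉ Ideal.span (Set.range f))
    (hw : w.IsHomogeneous (∑ i, (a i - 1))) :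
    ∃ c : K, w - c • u ∈ Ideal.span (Set.range f) := by
  obtain ⟨c, hc⟩ := hf.exists_sub_mul_mem_span hfa huF (hf.X_mul_mem_span hfa hu)
    (hf.X_mul_mem_span hfa hw)
  refine ⟨coeff 0 c, ?_⟩
  have comp_mem := isHomog_span_range hfa _ hc (∑ i, (a i - 1) + 0)
  rwa [map_sub, mul_comm c u, homogeneousComponent_add_mul hu, add_zero,
    homogeneousComponent_eq_self hw, homogeneousComponent_zero, mul_comm, ← smul_eq_C_mul]
    at comp_mem

theorem IsRegSeq.exists_linearMap_eq_zero_iff (hf : IsRegSeq f)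
    (hfa : ∀ i, (f i).IsHomogeneous (a i)) :
    ∃ φ : MvPolynomial (Fin n) K →ₗ[K] K, ∀ w : MvPolynomial (Fin n) K,
      w.IsHomogeneous (∑ i, (a i - 1)) → (φ w = 0 ↔ w ∈ Ideal.span (Set.range f)) := by
  obtain ⟨u, hu, huF⟩ := hf.exists_isHomogeneous_notMem_span hfa
  obtain ⟨φ, hφu, hφF⟩ := Submodule.exists_le_ker_of_notMem
    (p := (Ideal.span (Set.range f)).restrictScalars K) huF
  refine ⟨φ, fun w hw => ⟨fun hφw => ?_, fun hwF => hφF hwF⟩⟩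
  obtain ⟨c, hc⟩ := hf.exists_sub_smul_mem_span hfa hu huF hw
  have c_mul : c * φ u = 0 := by simpa [hφw] using hφF hc
  simpa [(mul_eq_zero.1 c_mul).resolve_right hφu] using hc

theorem IsRegSeq.mem_span_of_forall_X_mul_mem (hf : IsRegSeq f)
    (hfa : ∀ i, (f i).IsHomogeneous (a i)) {t : ℕ} (ht : t < ∑ i, (a i - 1))
    {p : MvPolynomial (Fin n) K} (hp : p.IsHomogeneous t)
    (hXp : ∀ i, X i * p ∈ Ideal.span (Set.range f)) : p ∈ Ideal.span (Set.range f) := by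
  obtain ⟨u, hu, huF⟩ := hf.exists_isHomogeneous_notMem_span hfa
  obtain ⟨c, hc⟩ := hf.exists_sub_mul_mem_span hfa huF (hf.X_mul_mem_span hfa hu) hXp
  have comp_mem := isHomog_span_range hfa _ hc t
  rwa [map_sub, mul_comm c u, homogeneousComponent_mul_of_lt hu c ht, sub_zero,
    homogeneousComponent_eq_self hp] at comp_mem

theorem IsRegSeq.mem_span_of_forall_mul_mem (hf : IsRegSeq f) (hfa : ∀ i, (f i).IsHomogeneous (a i))
    {t k : ℕ} (htk : t + k = ∑ i, (a i - 1))
    {p : MvPolynomial (Fin n) K} (hp : p.IsHomogeneous t)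
    (hmul : ∀ q : MvPolynomial (Fin n) K, q.IsHomogeneous k →
      q * p ∈ Ideal.span (Set.range f)) :
    p ∈ Ideal.span (Set.range f) := by
  induction k generalizing t p with
  | zero => simpa using hmul 1 (isHomogeneous_one _ _)
  | succ k ih =>
    refine hf.mem_span_of_forall_X_mul_mem hfa (by omega) hp fun i => ?_
    refine ih (t := 1 + t) (by omega) ((isHomogeneous_X K i).mul hp) fun q hq => ?_
    rw [← mul_assoc]
    exact hmul _ (hq.mul (isHomogeneous_X K i))

theorem IsRegSeq.mem_colon_span_iff (hf : IsRegSeq f) (hfa : ∀ i, (f i).IsHomogeneous (a i))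
    {I : Ideal (MvPolynomial (Fin n) K)} (hI : IsHomog I) {t e : ℕ}
    (hte : t + e = ∑ i, (a i - 1)) {q : MvPolynomial (Fin n) K} (hq : q.IsHomogeneous e) :
    q ∈ (Ideal.span (Set.range f)).colon I ↔
      ∀ p ∈ degreePart I t, p * q ∈ Ideal.span (Set.range f) := by
  rw [hI.mem_colon_iff]
  refine ⟨fun h p hp => mul_comm q p ▸ h t p hp, fun h k p hp => ?_⟩
  obtain hkt | htk := le_or_gt k t
  · refine hf.mem_span_of_forall_mul_mem hfa (k := t - k) (by omega) (hq.mul hp.2) fun r hr => ?_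
    rw [mul_left_comm, mul_comm]
    exact h _ ⟨I.mul_mem_left r hp.1, Nat.sub_add_cancel hkt ▸ hr.mul hp.2⟩
  · exact hf.mem_span_of_sum_lt hfa (by omega) (hq.mul hp.2)

theorem IsRegSeq.hilbQ_span_eq_add_hilbQ_colon (hf : IsRegSeq f)
    (hfa : ∀ i, (f i).IsHomogeneous (a i)) {I : Ideal (MvPolynomial (Fin n) K)}
    (hI : IsHomog I) (hfI : ∀ i, f i ∈ I) {t e : ℕ} (hte : t + e = ∑ i, (a i - 1)) :
    hilbQ (Ideal.span (Set.range f)) t =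
      hilbQ I t + hilbQ ((Ideal.span (Set.range f)).colon I) e := by
  have hFI : Ideal.span (Set.range f) ≤ I := Ideal.span_le.2 (Set.range_subset_iff.2 hfI)
  obtain ⟨φ, hφ⟩ := hf.exists_linearMap_eq_zero_iff hfa
  have pairing_eq_zero {p q : MvPolynomial (Fin n) K} (hp : p.IsHomogeneous t)
      (hq : q.IsHomogeneous e) : φ (p * q) = 0 ↔ p * q ∈ Ideal.span (Set.range f) :=
    hφ _ (hte ▸ hp.mul hq)
  have left_radical : ∀ p, p ∈ degreePart (Ideal.span (Set.range f)) t ↔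
      p ∈ degreePart I t ∧ ∀ q ∈ homogeneousSubmodule (Fin n) K e, φ (p * q) = 0 := fun p =>
    ⟨fun hp => ⟨⟨hFI hp.1, hp.2⟩, fun q hq =>
        (pairing_eq_zero hp.2 hq).2 (Ideal.mul_mem_right _ _ hp.1)⟩,
      fun hp => ⟨hf.mem_span_of_forall_mul_mem hfa hte hp.1.2 fun q hq =>
        mul_comm p q ▸ (pairing_eq_zero hp.1.2 hq).1 (hp.2 q hq), hp.1.2⟩⟩
  have right_radical : ∀ q, q ∈ degreePart ((Ideal.span (Set.range f)).colon I) e ↔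
      q ∈ homogeneousSubmodule (Fin n) K e ∧ ∀ p ∈ degreePart I t, φ (p * q) = 0 := fun q =>
    ⟨fun hq => ⟨hq.2, fun p hp =>
        (pairing_eq_zero hp.2 hq.2).2 ((hf.mem_colon_span_iff hfa hI hte hq.2).1 hq.1 p hp)⟩,
      fun hq => ⟨(hf.mem_colon_span_iff hfa hI hte hq.1).2 fun p hp =>
        (pairing_eq_zero hp.2 hq.1).1 (hq.2 p hp), hq.1⟩⟩
  have finrank_pairing : hilb I t + hilb ((Ideal.span (Set.range f)).colon I) e =
      Module.finrank K (homogeneousSubmodule (Fin n) K e) + hilb (Ideal.span (Set.range f)) t :=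
    finrank_add_finrank_eq_of_radicals ((LinearMap.mul K (MvPolynomial (Fin n) K)).compr₂ φ)
      left_radical right_radical
  have := hilb_add_hilbQ I t
  have := hilb_add_hilbQ (Ideal.span (Set.range f)) t
  have := hilb_add_hilbQ ((Ideal.span (Set.range f)).colon I) e
  omega

theorem IsRegSeq.hilbQ_span_symm (hf : IsRegSeq f) (hfa : ∀ i, (f i).IsHomogeneous (a i))
    {t e : ℕ} (hte : t + e = ∑ i, (a i - 1)) :
    hilbQ (Ideal.span (Set.range f)) t = hilbQ (Ideal.span (Set.range f)) e := by
  have hilbQ_top : hilbQ (⊤ : Ideal (MvPolynomial (Fin n) K)) t = 0 :=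
    hilbQ_eq_zero_iff.2 fun _ _ => trivial
  rw [hf.hilbQ_span_eq_add_hilbQ_colon hfa (I := ⊤) (fun _ _ _ => trivial) (fun _ => trivial) hte,
    hilbQ_top, zero_add, Submodule.top_coe, Submodule.colon_univ]

end CompleteIntersection

section Linkage

variable {K : Type} [Field K] {n : ℕ} {f g : Fin n → MvPolynomial (Fin n) K} {a : Fin n → ℕ}
  {I J : Ideal (MvPolynomial (Fin n) K)}

theorem hilb_eq_hilb_colon_of_hilb_colon_eq (hf : IsRegSeq f) (hg : IsRegSeq g)
    (hfa : ∀ i, (f i).IsHomogeneous (a i)) (hga : ∀ i, (g i).IsHomogeneous (a i))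
    (hI : IsHomog I) (hJ : IsHomog J) (hfI : ∀ i, f i ∈ I) (hgJ : ∀ i, g i ∈ J)
    {t e : ℕ} (hte : t + e = ∑ i, (a i - 1))
    (hIJ : hilb ((Ideal.span (Set.range f)).colon I) e = hilb J e) :
    hilb I t = hilb ((Ideal.span (Set.range g)).colon J) t := by
  have hilbQ_eq := hf.hilbQ_eq hg hfa hga t
  have liaison_f := hf.hilbQ_span_eq_add_hilbQ_colon hfa hI hfI hte
  have liaison_g := hg.hilbQ_span_eq_add_hilbQ_colon hga hJ hgJ ((add_comm e t).trans hte)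
  have symm_g := hg.hilbQ_span_symm hga hte
  have := hilb_add_hilbQ I t
  have := hilb_add_hilbQ J e
  have := hilb_add_hilbQ ((Ideal.span (Set.range f)).colon I) e
  have := hilb_add_hilbQ ((Ideal.span (Set.range g)).colon J) t
  omega

theorem EGHd.of_add_eq {d e : ℕ} (hde : d + e + 1 = ∑ i, (a i - 1)) (h : EGHd K n a d) :
    EGHd K n a e := by
  rintro I hI ⟨f, hf, hfa, hfI⟩
  have mem_colon (g : Fin n → MvPolynomial (Fin n) K) (J : Ideal (MvPolynomial (Fin n) K)) (i) :
      g i ∈ (Ideal.span (Set.range g)).colon J :=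
    Ideal.le_colon (Ideal.subset_span (Set.mem_range_self i))
  obtain ⟨J, hJ, hXJ, hJd, hJd1⟩ := h ((Ideal.span (Set.range f)).colon I)
    ((isHomog_span_range hfa).colon hI) ⟨f, hf, hfa, mem_colon f I⟩
  have hX := isRegSeq_purePowers (K := K) (hf.degree_pos hfa)
  exact ⟨(Ideal.span (Set.range (purePowers K a))).colon J,
    (isHomog_span_range isHomogeneous_purePowers).colon hJ, mem_colon (purePowers K a) J,
    hilb_eq_hilb_colon_of_hilb_colon_eq hf hX hfa isHomogeneous_purePowers hI hJ hfI
      hXJ (by omega) hJd1,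
    hilb_eq_hilb_colon_of_hilb_colon_eq hf hX hfa isHomogeneous_purePowers hI hJ hfI
      hXJ (by omega) hJd⟩

end Linkage

theorem stmt9_general {K : Type} [Field K] {n : ℕ} {a : Fin n → ℕ} {d e : ℕ}
    (hde : d + e + 1 = ∑ i, (a i - 1)) : EGHd K n a d ↔ EGHd K n a e :=
  ⟨EGHd.of_add_eq hde, EGHd.of_add_eq (by omega)⟩

/-- with `s = Σ (a i − 1)`, `EGH_{a,n}(d)` holds iff `EGH_{a,n}(s−d−1)` holds. -/
theorem stmt9 {K : Type} [Field K] {n : ℕ} (a : Fin n → ℕ)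
    (ha2 : ∀ i, 2 ≤ a i) (hmono : Monotone a)
    (s : ℕ) (hs : s = ∑ i, (a i - 1)) (d : ℕ) (hd : d < s) :
    EGHd K n a d ↔ EGHd K n a (s - d - 1) := by
  exact stmt9_general (by omega)
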